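/- Let ⟨G, Eℓ⟩ be a two-player game graph with live edges and let R̃ = {(𝐆_1, R_1), …, (𝐆_k, R_k)} be a generalized Rabin condition with index set P = {1, …, k}, where 𝐆_j = {G_j^1, …, G_j^{m_j}} with G_j^l ⊆ V. With p_0 := 0, l_0 := 1, G_{p_0}^{1} := ∅ and R_{p_0} := ∅, define Z* := νY_{p_0}. μX_{p_0}. ⋃_{p_1 ∈ P} νY_{p_1}. ⋂_{l_1 ∈ [1;m_{p_1}]} μ X_{p_1}^{l_1}. ⋯ ⋃_{p_k ∈ P∖{p_1,…,p_{k−1}}} νY_{p_k}. ⋂_{l_k ∈ [1;m_{p_k}]} μ X_{p_k}^{l_k}. ⋃_{j=0}^{k} C_{p_j}^{l_j}, where C_{p_j}^{l_j} := ( ⋂_{i=0}^{j} (V ∖ R_{p_i}) ) ∩ [ (G_{p_j}^{l_j} ∩ Cpre(Y_{p_j})) ∪ Apre(Y_{p_j}, X_{p_j}^{l_j}) ], with X_{p_0}^{1} := X_{p_0}. Then Z* equals the winning region W of Player 0 in the fair adversarial game over ⟨G, Eℓ⟩ for the generalized Rabin winning condition φ = ⋁_{j∈P} ( ◇□(V∖R_j)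 ∧ ⋀_{l∈[1;m_j]} □◇G_j^l ). Moreover, there exists a finite-memory Player-0 strategy that wins the fair adversarial game for φ from every vertex of Z*. -/

import Mathlib

/-- Least fixed point of a set transformer (Knaster–Tarski form). -/
def lfpSet {V : Type*} (f : Set V → Set V) : Set V := sInf {X | f X ⊆ X}

/-- Greatest fixed point of a set transformer (Knaster–Tarski form). -/
def gfpSet {V : Type*} (f : Set V → Set V) : Set V := sSup {X | X ⊆ f X}

/-- A two-player game graph with live edges: vertices are partitioned into
Player-0 vertices `V0` and Player-1 vertices `V1`, every vertex has a successor,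
and live edges `El` are Player-1 edges. -/
structure LiveGameGraph (V : Type*) where
  V0 : Set V
  V1 : Set V
  E : V → V → Prop
  El : V → V → Prop
  cover : V0 ∪ V1 = Set.univ
  disj : V0 ∩ V1 = ∅
  succ_nonempty : ∀ v : V, ∃ w, E v w
  live_sub : ∀ v w, El v w → v ∈ V1 ∧ E v w

namespace LiveGameGraph

variable {V : Type*}

/-- Pre∃0(S) -/
def pre0 (Gm : LiveGameGraph V) (S : Set V) : Set V :=
  {v | v ∈ Gm.V0 ∧ ∃ w, Gm.E v w ∧ w ∈ S}

/-- Pre∀1(S) -/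
def pre1 (Gm : LiveGameGraph V) (S : Set V) : Set V :=
  {v | v ∈ Gm.V1 ∧ ∀ w, Gm.E v w → w ∈ S}

/-- Cpre(S) -/
def cpre (Gm : LiveGameGraph V) (S : Set V) : Set V := Gm.pre0 S ∪ Gm.pre1 S

/-- Lpre∃(T) -/
def lpre (Gm : LiveGameGraph V) (T : Set V) : Set V :=
  {v | ∃ w, Gm.El v w ∧ w ∈ T}

/-- Apre(S,T) -/
def apre (Gm : LiveGameGraph V) (S T : Set V) : Set V :=
  Gm.cpre T ∪ (Gm.lpre T ∩ Gm.pre1 S)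

end LiveGameGraph

namespace LiveGameGraph

variable {V : Type*}

/-- A play is strongly transition fair if every live edge whose source is visited
infinitely often is itself taken infinitely often. -/
def StronglyFair (Gm : LiveGameGraph V) (π : ℕ → V) : Prop :=
  ∀ v w, Gm.El v w → {i | π i = v}.Infinite → {i | π i = v ∧ π (i + 1) = w}.Infinite

/-- A Player-0 strategy: given the history (the prefix before the current vertex)
and the current vertex, it chooses an `E`-successor whenever the current vertex
belongs to Player 0. -/
def Strategy0 (Gm : LiveGameGraph V) (ρ : List V → V → V) : Prop :=
  ∀ h v, v ∈ Gm.V0 → Gm.E v (ρ h v)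

/-- A Player-1 strategy. -/
def Strategy1 (Gm : LiveGameGraph V) (ρ : List V → V → V) : Prop :=
  ∀ h v, v ∈ Gm.V1 → Gm.E v (ρ h v)

/-- The play compliant with the strategies `ρ0` and `ρ1` starting at `v0`. -/
def Compliant (Gm : LiveGameGraph V) (ρ0 ρ1 : List V → V → V) (v0 : V)
    (π : ℕ → V) : Prop :=
  π 0 = v0 ∧ ∀ i : ℕ,
    (π i ∈ Gm.V0 → π (i + 1) = ρ0 (List.ofFn fun j : Fin i => π j.1) (π i)) ∧
    (π i ∈ Gm.V1 → π (i + 1) = ρ1 (List.ofFn fun j : Fin i => π j.1) (π i))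

/-- Player 0 wins the fair adversarial game for the winning condition `φ`
from `v0` using the strategy `ρ0`. -/
def WinsFrom (Gm : LiveGameGraph V) (φ : (ℕ → V) → Prop)
    (ρ0 : List V → V → V) (v0 : V) : Prop :=
  Gm.Strategy0 ρ0 ∧ ∀ ρ1, Gm.Strategy1 ρ1 → ∀ π, Gm.Compliant ρ0 ρ1 v0 π →
    (Gm.StronglyFair π → φ π)

/-- The winning region of Player 0 in the fair adversarial game for `φ`. -/
def WinningRegion (Gm : LiveGameGraph V) (φ : (ℕ → V) → Prop) : Set V :=
  {v0 | ∃ ρ0, Gm.WinsFrom φ ρ0 v0}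

end LiveGameGraph

namespace LiveGameGraph

variable {V : Type*}

/-- The nested permutation-based generalized Rabin fixpoint.  `Gs p l` is the
`l`-th goal set of pair `p` (for `l ∈ [1;m p]`), `Rp p` the corresponding
co-safety set.  `avail`, `Qcur` and `acc` are as in the plain Rabin fixpoint. -/
def genRabinAux (Gm : LiveGameGraph V) (Gs : ℕ → ℕ → Set V) (Rp : ℕ → Set V)
    (m : ℕ → ℕ) : ℕ → Finset ℕ → Set V → Set V → Set V
  | 0, _, _, acc => acc
  | n + 1, avail, Qcur, acc =>
      ⋃ p ∈ avail,
        gfpSet fun Y => ⋂ l ∈ Finset.Icc 1 (m p), lfpSet fun X =>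
          Gm.genRabinAux Gs Rp m n (avail.erase p) (Qcur ∩ (Rp p)ᶜ)
            (acc ∪ ((Qcur ∩ (Rp p)ᶜ) ∩ ((Gs p l ∩ Gm.cpre Y) ∪ Gm.apre Y X)))

/-- The full permutation-based generalized Rabin fixpoint Z*, with the artificial
pair p_0 = 0, l_0 = 1, G_0^1 = ∅, R_0 = ∅ handled by the outermost νY_0. μX_0. -/
def genRabinZ (Gm : LiveGameGraph V) (Gs : ℕ → ℕ → Set V) (Rp : ℕ → Set V)
    (m : ℕ → ℕ) (k : ℕ) : Set V :=
  gfpSet fun Y0 => lfpSet fun X0 =>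
    Gm.genRabinAux Gs Rp m k (Finset.Icc 1 k) ((∅ : Set V)ᶜ)
      (((∅ : Set V)ᶜ) ∩ (((∅ : Set V) ∩ Gm.cpre Y0) ∪ Gm.apre Y0 X0))

end LiveGameGraph

/-!
Soundness: a strategy for the inner levels is lifted through a level `νY. ⋂ₗ μX` of the formula by
pursuing the goals `l` in cyclic order. For one goal, Player 0 follows the inner strategy for the
stage of the iteration of `μX` at which the current vertex enters, and descends to the stage below
whenever `Apre` permits it; fairness forbids stalling at such vertices infinitely often, so
eventually the stage is constant and a single inner strategy is being followed. A union over the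
pairs is handled by following the least pair whose region contains the current vertex. The memory
stays finite because that of an inner strategy does not depend on the region it targets.

Completeness: fix a strategy of Player 0, whose plays are the branches of an unfolding. Outside
the fixpoint Player 1 can, for each pair, either violate the condition along a fair branch or
reach `R_p`. Where only the latter is possible, for every available pair, and remains so for as
long as Player 1 wishes, a fair branch visits every `R_p` infinitely often.
-/

/-! ### Iteration of set transformers -/

section FixedPoints

variable {V : Type*} {f g : Set V → Set V} {S : Set V} {v w : V}

theorem lfpSet_subset (h : f S ⊆ S) : lfpSet f ⊆ S :=
  sInf_le h

theorem subset_gfpSet (h : S ⊆ f S) : S ⊆ gfpSet f :=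
  le_sSup (a := S) h

theorem map_lfpSet (hf : Monotone f) : f (lfpSet f) = lfpSet f :=
  OrderHom.map_lfp ⟨f, hf⟩

theorem map_gfpSet (hf : Monotone f) : f (gfpSet f) = gfpSet f :=
  OrderHom.map_gfp ⟨f, hf⟩

theorem lfpSet_mono (h : ∀ S, f S ⊆ g S) : lfpSet f ⊆ lfpSet g :=
  sInf_le_sInf fun S hS ↦ (h S).trans hS

theorem gfpSet_mono (h : ∀ S, f S ⊆ g S) : gfpSet f ⊆ gfpSet g :=
  sSup_le_sSup fun S hS ↦ Set.Subset.trans hS (h S)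

theorem iterate_empty_subset_lfpSet (hf : Monotone f) (n : ℕ) : f^[n] ∅ ⊆ lfpSet f := by
  induction n with
  | zero => exact Set.empty_subset _
  | succ n ih =>
    rw [Function.iterate_succ_apply', ← map_lfpSet hf]
    exact hf ih

theorem exists_mem_iterate_empty [Finite V] (hf : Monotone f) (hv : v ∈ lfpSet f) :
    ∃ n, v ∈ f^[n + 1] ∅ := by
  have hmono : Monotone fun n ↦ f^[n] (∅ : Set V) :=
    hf.monotone_iterate_of_le_map (Set.empty_subset _)
  obtain ⟨n, hn⟩ := WellFoundedGT.monotone_chain_condition (⟨_, hmono⟩ : ℕ →o Set V)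
  have hstable : f^[n] ∅ = f^[n + 1] ∅ := hn (n + 1) n.le_succ
  have hfix : f (f^[n] ∅) ⊆ f^[n] ∅ := by rw [← Function.iterate_succ_apply' f, ← hstable]
  exact ⟨n, hstable ▸ lfpSet_subset hfix hv⟩

/-- The index of the last stage of the iteration `∅, f ∅, f (f ∅), …` that does not yet
contain `v`; it is meaningful only if some stage contains `v`. -/
noncomputable def lfpRank (f : Set V → Set V) (v : V) : ℕ :=
  sInf {n | v ∈ f^[n + 1] ∅}

/-- The stage of the iteration `∅, f ∅, f (f ∅), …` just before `v` enters. -/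
noncomputable def lfpBelow (f : Set V → Set V) (v : V) : Set V :=
  f^[lfpRank f v] ∅

theorem lfpBelow_subset_lfpSet (hf : Monotone f) : lfpBelow f v ⊆ lfpSet f :=
  iterate_empty_subset_lfpSet hf _

theorem mem_map_lfpBelow [Finite V] (hf : Monotone f) (hv : v ∈ lfpSet f) :
    v ∈ f (lfpBelow f v) := by
  have hmem : v ∈ f^[lfpRank f v + 1] ∅ := Nat.sInf_mem (exists_mem_iterate_empty hf hv)
  rwa [Function.iterate_succ_apply'] at hmem

theorem lfpRank_le_of_mem (hw : w ∈ f (lfpBelow f v)) : lfpRank f w ≤ lfpRank f v :=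
  Nat.sInf_le <| by rwa [Set.mem_ofPred_eq, Function.iterate_succ_apply']

theorem lfpRank_lt_of_mem (hw : w ∈ lfpBelow f v) : lfpRank f w < lfpRank f v := by
  unfold lfpBelow at hw
  cases hn : lfpRank f v with
  | zero => simp [hn] at hw
  | succ n => exact Nat.lt_succ_of_le (Nat.sInf_le (by rwa [hn] at hw))

end FixedPoints

namespace LiveGameGraph

/-! ### Levels of the fixpoint formula -/

section Operators

variable {V : Type*} {Gm : LiveGameGraph V} {S S' T T' : Set V}

theorem mem_V0_or_mem_V1 (Gm : LiveGameGraph V) (v : V) : v ∈ Gm.V0 ∨ v ∈ Gm.V1 :=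
  Gm.cover.superset (Set.mem_univ v)

theorem notMem_V1_of_mem_V0 {v : V} (hv : v ∈ Gm.V0) : v ∉ Gm.V1 :=
  fun hv' ↦ Gm.disj.subset ⟨hv, hv'⟩

theorem cpre_mono (Gm : LiveGameGraph V) : Monotone Gm.cpre := by
  rintro S T h v (⟨hv, w, hE, hw⟩ | ⟨hv, hE⟩)
  · exact Or.inl ⟨hv, w, hE, h hw⟩
  · exact Or.inr ⟨hv, fun w hw ↦ h (hE w hw)⟩

theorem apre_mono (hS : S ⊆ S') (hT : T ⊆ T') : Gm.apre S T ⊆ Gm.apre S' T' := by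
  rintro v (hv | ⟨⟨w, hEl, hw⟩, hv, hE⟩)
  · exact Or.inl (Gm.cpre_mono hT hv)
  · exact Or.inr ⟨⟨w, hEl, hT hw⟩, hv, fun w hw ↦ hS (hE w hw)⟩

theorem apre_subset_cpre (h : T ⊆ S) : Gm.apre S T ⊆ Gm.cpre S :=
  Set.union_subset (Gm.cpre_mono h) (Set.inter_subset_right.trans Set.subset_union_right)

/-- One summand `C` of the fixpoint formula, added to the vertices `acc` contributed by the
enclosing levels; `Q` is the set of vertices allowed by the co-safety sets chosen so far. -/
def target (Gm : LiveGameGraph V) (Q G acc Y X : Set V) : Set V :=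
  acc ∪ (Q ∩ ((G ∩ Gm.cpre Y) ∪ Gm.apre Y X))

/-- One level `νY. ⋂_l μX. Φ (acc ∪ C^l)` of the fixpoint formula, where `Φ` stands for the
levels nested inside it and `L` indexes the goal sets. -/
def level (Gm : LiveGameGraph V) {α : Type*} (Φ : Set V → Set V) (Q : Set V) (G : α → Set V)
    (L : Finset α) (acc : Set V) : Set V :=
  gfpSet fun Y ↦ ⋂ l ∈ L, lfpSet fun X ↦ Φ (Gm.target Q (G l) acc Y X)

/-- The structural properties shared by all levels of the fixpoint formula. The last one says
that from `Φ A` Player 0 can stay in `Φ A`, within `Q`, until `A` is reached. -/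
structure IsRegionOperator (Gm : LiveGameGraph V) (Φ : Set V → Set V) (Q : Set V) : Prop where
  mono : Monotone Φ
  subset_map : ∀ A, A ⊆ Φ A
  map_subset : ∀ A, Φ A ⊆ A ∪ (Q ∩ Gm.cpre (Φ A))

variable {Φ : Set V → Set V} {Q G acc acc' X X' Y Y' : Set V}

theorem target_eq : Gm.target Q G acc Y X =
    (acc ∪ (Q ∩ (G ∩ Gm.cpre Y))) ∪ (Q ∩ Gm.apre Y X) := by
  rw [target, Set.inter_union_distrib_left, Set.union_assoc]

theorem target_mono (hacc : acc ⊆ acc') (hY : Y ⊆ Y') (hX : X ⊆ X') :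
    Gm.target Q G acc Y X ⊆ Gm.target Q G acc' Y' X' :=
  Set.union_subset_union hacc <| Set.inter_subset_inter_right _ <|
    Set.union_subset_union (Set.inter_subset_inter_right _ (Gm.cpre_mono hY)) (apre_mono hY hX)

theorem target_subset (h : X ⊆ Y) : Gm.target Q G acc Y X ⊆ acc ∪ (Q ∩ Gm.cpre Y) :=
  Set.union_subset_union_right _ <| Set.inter_subset_inter_right _ <|
    Set.union_subset Set.inter_subset_right (apre_subset_cpre h)

namespace IsRegionOperator

theorem inner_mono (hΦ : Gm.IsRegionOperator Φ Q) (G acc Y : Set V) :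
    Monotone fun X ↦ Φ (Gm.target Q G acc Y X) :=
  fun _ _ h ↦ hΦ.mono (target_mono subset_rfl subset_rfl h)

theorem map_target_lfpSet (hΦ : Gm.IsRegionOperator Φ Q) (G acc Y : Set V) :
    Φ (Gm.target Q G acc Y (lfpSet fun X ↦ Φ (Gm.target Q G acc Y X))) =
      lfpSet fun X ↦ Φ (Gm.target Q G acc Y X) :=
  map_lfpSet (hΦ.inner_mono G acc Y)

theorem target_lfpSet (hΦ : Gm.IsRegionOperator Φ Q) (G acc Y : Set V) :
    Gm.target Q G acc Y (lfpSet fun X ↦ Φ (Gm.target Q G acc Y X)) =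
      lfpSet fun X ↦ Φ (Gm.target Q G acc Y X) := by
  have hfix := hΦ.map_target_lfpSet G acc Y
  set X := lfpSet fun X ↦ Φ (Gm.target Q G acc Y X)
  refine ((hΦ.subset_map _).trans hfix.subset).antisymm fun v hv ↦ ?_
  rw [← hfix] at hv
  rcases hΦ.map_subset _ hv with hv | ⟨hvQ, hvX⟩
  · exact hv
  · rw [hfix] at hvX
    exact Or.inr ⟨hvQ, Or.inr (Or.inl hvX)⟩

section Level

variable {α : Type*} {G : α → Set V} {L : Finset α}

theorem level_eq_iInter (hΦ : Gm.IsRegionOperator Φ Q) (G : α → Set V) (L : Finset α)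
    (acc : Set V) :
    ⋂ l ∈ L, lfpSet (fun X ↦ Φ (Gm.target Q (G l) acc (Gm.level Φ Q G L acc) X)) =
      Gm.level Φ Q G L acc :=
  map_gfpSet (f := fun Y ↦ ⋂ l ∈ L, lfpSet fun X ↦ Φ (Gm.target Q (G l) acc Y X))
    fun _ _ h ↦ Set.iInter₂_mono fun _ _ ↦ lfpSet_mono fun _ ↦
      hΦ.mono (target_mono subset_rfl h subset_rfl)

theorem level_subset_lfpSet (hΦ : Gm.IsRegionOperator Φ Q) {l : α} (hl : l ∈ L) :
    Gm.level Φ Q G L acc ⊆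
      lfpSet fun X ↦ Φ (Gm.target Q (G l) acc (Gm.level Φ Q G L acc) X) :=
  (hΦ.level_eq_iInter G L acc).superset.trans (Set.iInter₂_subset l hl)

-- A vertex of the target for the goal `l` lies in `acc` or in `cpre Y`, hence in the target for
-- every other goal `l'` too: its least fixed point contains `Y`.
theorem map_target_level_subset (hΦ : Gm.IsRegionOperator Φ Q) (S : Set V) :
    Φ (Gm.target Q S acc (Gm.level Φ Q G L acc) (Gm.level Φ Q G L acc)) ⊆
      Gm.level Φ Q G L acc := by
  conv_rhs => rw [← hΦ.level_eq_iInter]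
  refine Set.subset_iInter₂ fun l hl ↦ ?_
  rw [← hΦ.map_target_lfpSet]
  refine hΦ.mono ((target_subset subset_rfl).trans (Set.union_subset_union_right _ ?_))
  refine Set.inter_subset_inter_right _ (Set.Subset.trans ?_ Set.subset_union_right)
  exact (Gm.cpre_mono (hΦ.level_subset_lfpSet hl)).trans Set.subset_union_left

theorem lfpSet_target_level (hΦ : Gm.IsRegionOperator Φ Q) {l : α} (hl : l ∈ L) :
    lfpSet (fun X ↦ Φ (Gm.target Q (G l) acc (Gm.level Φ Q G L acc) X)) =
      Gm.level Φ Q G L acc :=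
  (lfpSet_subset (hΦ.map_target_level_subset _)).antisymm (hΦ.level_subset_lfpSet hl)

theorem map_target_level (hΦ : Gm.IsRegionOperator Φ Q) {l : α} (hl : l ∈ L) :
    Φ (Gm.target Q (G l) acc (Gm.level Φ Q G L acc) (Gm.level Φ Q G L acc)) =
      Gm.level Φ Q G L acc := by
  simpa only [hΦ.lfpSet_target_level hl] using
    hΦ.map_target_lfpSet (G l) acc (Gm.level Φ Q G L acc)

theorem level (hΦ : Gm.IsRegionOperator Φ Q) (G : α → Set V) (hL : L.Nonempty) :
    Gm.IsRegionOperator (Gm.level Φ Q G L) Q where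
  mono _ _ h := gfpSet_mono fun _ ↦ Set.iInter₂_mono fun _ _ ↦ lfpSet_mono fun _ ↦
    hΦ.mono (target_mono h subset_rfl subset_rfl)
  subset_map acc := by
    obtain ⟨l, hl⟩ := hL
    rw [← hΦ.map_target_level hl]
    exact Set.subset_union_left.trans (hΦ.subset_map _)
  map_subset acc := by
    obtain ⟨l, hl⟩ := hL
    have hsub := hΦ.map_subset
      (Gm.target Q (G l) acc (Gm.level Φ Q G L acc) (Gm.level Φ Q G L acc))
    rw [hΦ.map_target_level hl] at hsub
    exact hsub.trans (Set.union_subset (target_subset subset_rfl) Set.subset_union_right)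

end Level

theorem id : Gm.IsRegionOperator _root_.id Q :=
  ⟨monotone_id, fun _ ↦ subset_rfl, fun _ ↦ Set.subset_union_left⟩

theorem biUnion {α : Type*} {L : Finset α} {Φ : α → Set V → Set V} {Q' : α → Set V}
    (hΦ : ∀ p ∈ L, Gm.IsRegionOperator (Φ p) (Q' p)) (hQ : ∀ p ∈ L, Q' p ⊆ Q)
    (hL : L.Nonempty) : Gm.IsRegionOperator (fun A ↦ ⋃ p ∈ L, Φ p A) Q where
  mono _ _ h := Set.iUnion₂_mono fun p hp ↦ (hΦ p hp).mono h
  subset_map A := by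
    obtain ⟨p, hp⟩ := hL
    exact ((hΦ p hp).subset_map A).trans (Set.subset_biUnion_of_mem (u := fun p ↦ Φ p A) hp)
  map_subset A := Set.iUnion₂_subset fun p hp ↦ ((hΦ p hp).map_subset A).trans <|
    Set.union_subset_union_right _ <| Set.inter_subset_inter (hQ p hp) <|
      Gm.cpre_mono (Set.subset_biUnion_of_mem (u := fun p ↦ Φ p A) hp)

end IsRegionOperator

end Operators

section GenRabinFixpoint

variable {V : Type*} (Gm : LiveGameGraph V) (Gs : ℕ → ℕ → Set V) (Rp : ℕ → Set V) (m : ℕ → ℕ)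

theorem genRabinAux_succ (n : ℕ) (I : Finset ℕ) (Q : Set V) :
    Gm.genRabinAux Gs Rp m (n + 1) I Q = fun acc ↦ ⋃ p ∈ I,
      Gm.level (Gm.genRabinAux Gs Rp m n (I.erase p) (Q ∩ (Rp p)ᶜ)) (Q ∩ (Rp p)ᶜ) (Gs p)
        (Finset.Icc 1 (m p)) acc :=
  rfl

-- The outermost `νY₀. μX₀` is the level of the artificial pair, whose only goal set is empty.
theorem genRabinZ_eq_level (k : ℕ) :
    Gm.genRabinZ Gs Rp m k =
      Gm.level (Gm.genRabinAux Gs Rp m k (Finset.Icc 1 k) ∅ᶜ) ∅ᶜ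
        (fun _ ↦ ∅) (Finset.univ : Finset Unit) ∅ := by
  simp [genRabinZ, level, target, Set.iInter_const]

variable {m}

theorem isRegionOperator_genRabinAux {n : ℕ} {I : Finset ℕ} {Q : Set V} (hn : I.card = n)
    (hm : ∀ p ∈ I, 1 ≤ m p) : Gm.IsRegionOperator (Gm.genRabinAux Gs Rp m n I Q) Q := by
  induction n generalizing I Q with
  | zero => exact .id
  | succ n ih =>
    have hI : I.Nonempty := Finset.card_pos.1 (by omega)
    rw [genRabinAux_succ]
    refine .biUnion (Q' := fun p ↦ Q ∩ (Rp p)ᶜ) (fun p hp ↦ ?_) (fun _ _ ↦ Set.inter_subset_left)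
      hI
    have hcard : (I.erase p).card = n := by rw [Finset.card_erase_of_mem hp, hn]; rfl
    exact (ih hcard fun q hq ↦ hm q (Finset.mem_of_mem_erase hq)).level _
      (Finset.nonempty_Icc.2 (hm p hp))

end GenRabinFixpoint

end LiveGameGraph

/-! ### Sequences and tail properties -/

section Sequences

open Filter

theorem frequently_atTop_add_iff {P : ℕ → Prop} (n : ℕ) :
    (∃ᶠ i in atTop, P (i + n)) ↔ ∃ᶠ i in atTop, P i := by
  conv_rhs => rw [← map_add_atTop_eq_nat n, frequently_map]

theorem eventually_atTop_add_iff {P : ℕ → Prop} (n : ℕ) :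
    (∀ᶠ i in atTop, P (i + n)) ↔ ∀ᶠ i in atTop, P i := by
  conv_rhs => rw [← map_add_atTop_eq_nat n, eventually_map]

theorem exists_first_of_frequently {P : ℕ → Prop} (h : ∃ᶠ i in atTop, P i) (N : ℕ) :
    ∃ i ≥ N, P i ∧ ∀ j ≥ N, j < i → ¬P j := by
  classical
  have hex := frequently_atTop.1 h N
  obtain ⟨hN, hP⟩ := Nat.find_spec hex
  exact ⟨Nat.find hex, hN, hP, fun j hj hlt hPj ↦ Nat.find_min hex hlt ⟨hj, hPj⟩⟩

theorem exists_eventually_eq_of_eventually_succ_le {α : Type*} [PartialOrder α]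
    [WellFoundedLT α] {x : ℕ → α} (h : ∀ᶠ i in atTop, x (i + 1) ≤ x i) :
    ∃ a, ∀ᶠ i in atTop, x i = a := by
  obtain ⟨N, hN⟩ := eventually_atTop.1 h
  have hanti : Antitone fun i ↦ x (i + N) := antitone_nat_of_succ_le fun i ↦ by
    simpa only [Nat.add_right_comm] using hN (i + N) (Nat.le_add_left N i)
  obtain ⟨n, hn⟩ := WellFoundedGT.monotone_chain_condition
    (⟨fun i ↦ OrderDual.toDual (x (i + N)), hanti⟩ : ℕ →o αᵒᵈ)
  refine ⟨x (n + N), (eventually_atTop_add_iff N).1 (eventually_atTop.2 ⟨n, fun i hi ↦ ?_⟩)⟩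
  exact (hn i hi).symm

theorem exists_frequently_eq_of_succ_le {x : ℕ → ℕ} {D : ℕ → Prop} {z : ℕ}
    (hx : ∀ i, ¬D i → x (i + 1) ≤ x i) (hz : ∃ᶠ i in atTop, x i = z)
    (hD : ∃ᶠ i in atTop, D i) : ∃ y, (∀ᶠ i in atTop, y ≤ x i) ∧ ∃ᶠ i in atTop, D i ∧ x i = y := by
  classical
  have hex : ∃ y, ∃ᶠ i in atTop, x i = y := ⟨z, hz⟩
  set y := Nat.find hex
  have hlow : ∀ᶠ i in atTop, y ≤ x i := by
    refine ((Set.finite_lt_nat y).eventually_all.2 fun w hw ↦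
      not_frequently.1 (Nat.find_min hex hw)).mono fun i hi ↦ ?_
    exact not_lt.1 fun hlt ↦ hi _ hlt rfl
  refine ⟨y, hlow, frequently_atTop.2 fun N ↦ ?_⟩
  obtain ⟨N', hN'⟩ := eventually_atTop.1 hlow
  obtain ⟨i, hi, hxi⟩ := frequently_atTop.1 (Nat.find_spec hex) (max N N')
  obtain ⟨j, hij, hDj, hj⟩ := exists_first_of_frequently hD i
  have hle : ∀ n ≥ i, n ≤ j → x n ≤ y := fun n hn ↦ by
    induction n, hn using Nat.le_induction with
    | base => exact fun _ ↦ hxi.le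
    | succ n hn ih => exact fun hnj ↦ (hx n (hj n hn hnj)).trans (ih (Nat.le_of_lt hnj))
  exact ⟨j, by omega, hDj, (hle j hij le_rfl).antisymm (hN' j (by omega))⟩

theorem frequently_and_eq_of_isCycleOn {ι : Type*} [Finite ι] {P : ℕ → Prop} {c : ℕ → ι}
    {σ : Equiv.Perm ι} (hσ : σ.IsCycleOn Set.univ) (hmove : ∀ i, P i → c (i + 1) = σ (c i))
    (hstay : ∀ i, ¬P i → c (i + 1) = c i) (hP : ∃ᶠ i in atTop, P i) (l : ι) :
    ∃ᶠ i in atTop, P i ∧ c i = l := by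
  obtain ⟨l₀, hl₀⟩ : ∃ l₀, ∃ᶠ i in atTop, P i ∧ c i = l₀ :=
    frequently_exists.1 (hP.mono fun i hi ↦ ⟨c i, hi, rfl⟩)
  have hnext : ∀ l, (∃ᶠ i in atTop, P i ∧ c i = l) → ∃ᶠ i in atTop, P i ∧ c i = σ l := by
    refine fun l hl ↦ frequently_atTop.2 fun N ↦ ?_
    obtain ⟨i, hi, hPi, rfl⟩ := frequently_atTop.1 hl N
    obtain ⟨j, hij, hPj, hj⟩ := exists_first_of_frequently hP (i + 1)
    refine ⟨j, by omega, hPj, ?_⟩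
    have hconst : ∀ n ≥ i + 1, n ≤ j → c n = σ (c i) := fun n hn ↦ by
      induction n, hn using Nat.le_induction with
      | base => exact fun _ ↦ hmove i hPi
      | succ n hn ih => exact fun hnj ↦ (hstay n (hj n hn hnj)).trans (ih (Nat.le_of_lt hnj))
    exact hconst j hij le_rfl
  obtain ⟨n, rfl⟩ := hσ.exists_pow_eq' Set.finite_univ (Set.mem_univ l₀) (Set.mem_univ l)
  induction n with
  | zero => exact hl₀
  | succ n ih =>
    rw [pow_succ', Equiv.Perm.mul_apply]
    exact hnext _ ih

end Sequences

namespace LiveGameGraph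

section WinningConditions

open Filter

variable {V : Type*}

/-- Winning conditions that depend only on the tails of a play. -/
def TailInvariant (C : (ℕ → V) → Prop) : Prop :=
  ∀ π n, C (fun i ↦ π (i + n)) ↔ C π

theorem stronglyFair_iff {Gm : LiveGameGraph V} {π : ℕ → V} :
    Gm.StronglyFair π ↔ ∀ v w, Gm.El v w → (∃ᶠ i in atTop, π i = v) →
      ∃ᶠ i in atTop, π i = v ∧ π (i + 1) = w := by
  simp only [StronglyFair, Nat.frequently_atTop_iff_infinite]

theorem tailInvariant_stronglyFair (Gm : LiveGameGraph V) : TailInvariant Gm.StronglyFair := by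
  intro π n
  simp only [stronglyFair_iff, Nat.add_right_comm _ 1 n]
  refine forall₂_congr fun v w ↦ imp_congr_right fun _ ↦ ?_
  rw [frequently_atTop_add_iff n (P := fun i ↦ π i = v),
    frequently_atTop_add_iff n (P := fun i ↦ π i = v ∧ π (i + 1) = w)]

/-- The play visits each of the sets `G l`, `l ∈ L`, infinitely often. -/
def Recurrent {α : Type*} (G : α → Set V) (L : Finset α) (π : ℕ → V) : Prop :=
  ∀ l ∈ L, ∃ᶠ i in atTop, π i ∈ G l

/-- The generalized Rabin condition restricted to the pairs with index in `I`. -/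
def GenRabin (Gs : ℕ → ℕ → Set V) (Rp : ℕ → Set V) (m : ℕ → ℕ) (I : Finset ℕ)
    (π : ℕ → V) : Prop :=
  ∃ j ∈ I, (∀ᶠ i in atTop, π i ∉ Rp j) ∧ Recurrent (Gs j) (Finset.Icc 1 (m j)) π

theorem genRabin_iff {Gs : ℕ → ℕ → Set V} {Rp : ℕ → Set V} {m : ℕ → ℕ} {I : Finset ℕ}
    {π : ℕ → V} : GenRabin Gs Rp m I π ↔ ∃ j ∈ I, (∃ N, ∀ i ≥ N, π i ∉ Rp j) ∧
      ∀ l ∈ Finset.Icc 1 (m j), ∀ N, ∃ i ≥ N, π i ∈ Gs j l := by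
  simp only [GenRabin, Recurrent, eventually_atTop, frequently_atTop]

theorem tailInvariant_recurrent {α : Type*} (G : α → Set V) (L : Finset α) :
    TailInvariant (Recurrent G L) :=
  fun π n ↦ forall₂_congr fun l _ ↦ frequently_atTop_add_iff n (P := fun i ↦ π i ∈ G l)

theorem tailInvariant_genRabin (Gs : ℕ → ℕ → Set V) (Rp : ℕ → Set V) (m : ℕ → ℕ)
    (I : Finset ℕ) : TailInvariant (GenRabin Gs Rp m I) :=
  fun π n ↦ exists_congr fun j ↦ and_congr_right fun _ ↦
    and_congr (eventually_atTop_add_iff n (P := fun i ↦ π i ∉ Rp j))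
      (tailInvariant_recurrent _ _ π n)

end WinningConditions

/-! ### Soundness -/

section Soundness

open Filter

variable {V : Type*} {Gm : LiveGameGraph V}

open Classical in
/-- A successor of `v`, chosen in `S` whenever `v` has a successor there. -/
noncomputable def succIn (Gm : LiveGameGraph V) (S : Set V) (v : V) : V :=
  if h : ∃ w, Gm.E v w ∧ w ∈ S then h.choose else (Gm.succ_nonempty v).choose

theorem edge_succIn (S : Set V) (v : V) : Gm.E v (Gm.succIn S v) := by
  unfold succIn
  split_ifs with h
  · exact h.choose_spec.1
  · exact (Gm.succ_nonempty v).choose_spec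

theorem succIn_mem {S : Set V} {v : V} (h : ∃ w, Gm.E v w ∧ w ∈ S) : Gm.succIn S v ∈ S := by
  rw [succIn, dif_pos h]
  exact h.choose_spec.2

theorem mem_of_mem_cpre {S : Set V} {v w : V} (hv : v ∈ Gm.cpre S) (hE : Gm.E v w)
    (hw : v ∈ Gm.V0 → w = Gm.succIn S v) : w ∈ S := by
  rcases hv with ⟨hv, hS⟩ | ⟨-, hS⟩
  · rw [hw hv]
    exact succIn_mem hS
  · exact hS w hE

theorem mem_of_mem_apre {S T : Set V} {v w : V} (hTS : T ⊆ S) (hv : v ∈ Gm.apre S T)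
    (hE : Gm.E v w) (hw : v ∈ Gm.V0 → w = Gm.succIn T v) : w ∈ S := by
  rcases hv with hv | ⟨-, -, hS⟩
  · exact hTS (mem_of_mem_cpre hv hE hw)
  · exact hS w hE

-- Among the ranks of the descending positions, the least one attained infinitely often would be
-- undercut infinitely often: by the choice of `succIn`, or by fairness of a live edge.
theorem StronglyFair.eventually_notMem_of_apre_lfpBelow [Finite V] {π : ℕ → V}
    (hfair : Gm.StronglyFair π) {f : Set V → Set V} {D Y : Set V}
    (hE : ∀ i, Gm.E (π i) (π (i + 1)))
    (hrank : ∀ i, π i ∉ D → lfpRank f (π (i + 1)) ≤ lfpRank f (π i))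
    (hapre : ∀ v ∈ D, v ∈ Gm.apre Y (lfpBelow f v))
    (hmove : ∀ i, π i ∈ D → π i ∈ Gm.V0 → π (i + 1) = Gm.succIn (lfpBelow f (π i)) (π i)) :
    ∀ᶠ i in atTop, π i ∉ D := by
  by_contra hD
  replace hD : ∃ᶠ i in atTop, π i ∈ D := hD
  obtain ⟨z, hz⟩ : ∃ z, ∃ᶠ i in atTop, π i = z := frequently_exists.1 <|
    Frequently.of_forall fun i ↦ ⟨π i, rfl⟩
  obtain ⟨y, hlow, hy⟩ := exists_frequently_eq_of_succ_le (x := fun i ↦ lfpRank f (π i)) hrank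
    (hz.mono fun i hi ↦ congrArg _ hi) hD
  obtain ⟨v, hv⟩ : ∃ v, ∃ᶠ i in atTop, π i = v ∧ v ∈ D ∧ lfpRank f v = y :=
    frequently_exists.1 (hy.mono fun i hi ↦ ⟨π i, rfl, hi⟩)
  obtain ⟨-, -, hvD, rfl⟩ := hv.exists
  have hvisit : ∃ᶠ i in atTop, π i = v := hv.mono fun i hi ↦ hi.1
  have hbelow : ∃ᶠ i in atTop, π (i + 1) ∈ lfpBelow f v := by
    rcases hapre v hvD with hcpre | ⟨⟨w, hEl, hw⟩, -⟩
    · refine hvisit.mono fun i hi ↦ ?_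
      subst hi
      exact mem_of_mem_cpre hcpre (hE i) (hmove i hvD)
    · refine (stronglyFair_iff.1 hfair v w hEl hvisit).mono fun i hi ↦ ?_
      rwa [hi.2]
  obtain ⟨i, hi, hle⟩ := (hbelow.and_eventually
    ((eventually_atTop_add_iff (P := fun i ↦ lfpRank f v ≤ lfpRank f (π i)) 1).2 hlow)).exists
  exact (lfpRank_lt_of_mem hi).not_ge hle

section AttractMap

variable {Φ : Set V → Set V} {Q A Y : Set V}

/-- The map whose least fixed point is the region from which Player 0 can force a visit to `A`
by playing for `Φ`-regions and progressing along `Apre(Y, ·)`. -/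
def attractMap (Gm : LiveGameGraph V) (Φ : Set V → Set V) (Q A Y X : Set V) : Set V :=
  Φ (A ∪ (Q ∩ Gm.apre Y X))

/-- The vertices at which progress to the stage below is possible. -/
def progressSet (Gm : LiveGameGraph V) (Φ : Set V → Set V) (Q A Y : Set V) : Set V :=
  {v | v ∈ Q ∩ Gm.apre Y (lfpBelow (Gm.attractMap Φ Q A Y) v)}

/-- The set that Player 0 tries to reach from `v` by the strategy for `Φ`. -/
def attractTarget (Gm : LiveGameGraph V) (Φ : Set V → Set V) (Q A Y : Set V) (v : V) : Set V :=
  A ∪ (Q ∩ Gm.apre Y (lfpBelow (Gm.attractMap Φ Q A Y) v))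

theorem attractMap_mono (hΦ : Monotone Φ) : Monotone (Gm.attractMap Φ Q A Y) :=
  fun _ _ h ↦ hΦ <| Set.union_subset_union_right _ <| Set.inter_subset_inter_right _ <|
    apre_mono subset_rfl h

theorem mem_map_attractTarget [Finite V] (hΦ : Monotone Φ)
    (hY : lfpSet (Gm.attractMap Φ Q A Y) = Y) {v : V} (hv : v ∈ Y) :
    v ∈ Φ (Gm.attractTarget Φ Q A Y v) :=
  mem_map_lfpBelow (attractMap_mono hΦ) (hY.superset hv)

end AttractMap

/-- A Player-0 strategy with memory in `M`. It also proposes a successor at Player-1 vertices,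
which has no effect. -/
structure MemoryStrategy (Gm : LiveGameGraph V) (M : Type*) where
  move : M → V → V
  update : M → V → M
  edge_move : ∀ a v, Gm.E v (move a v)

namespace MemoryStrategy

variable {M : Type*} {S : Gm.MemoryStrategy M} {U acc : Set V} {C : (ℕ → V) → Prop}

/-- The edge from `v` to `w` is possible when Player 0 uses `S` with memory state `a`. -/
def Step (S : Gm.MemoryStrategy M) (a : M) (v w : V) : Prop :=
  Gm.E v w ∧ (v ∈ Gm.V0 → w = S.move a v)

/-- The play `π`, with memory states `a`, is consistent with `S`; the initial memory state is
arbitrary. -/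
structure IsRun (S : Gm.MemoryStrategy M) (a : ℕ → M) (π : ℕ → V) : Prop where
  step : ∀ i, S.Step (a i) (π i) (π (i + 1))
  update : ∀ i, a (i + 1) = S.update (a i) (π i)

/-- From every vertex of `U` and every memory state, `S` keeps the play in `U` until it reaches
`acc`, and it guarantees `C` on the fair plays that never reach `acc`. -/
structure Enforces (S : Gm.MemoryStrategy M) (U acc : Set V) (C : (ℕ → V) → Prop) : Prop where
  stay : ∀ {a v w}, v ∈ U → v ∉ acc → S.Step a v w → w ∈ U
  win : ∀ {a π}, S.IsRun a π → (∀ i, π i ∈ U) → (∀ i, π i ∉ acc) → Gm.StronglyFair π → C π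

theorem Enforces.mono {C' : (ℕ → V) → Prop} (hS : S.Enforces U acc C)
    (hC : ∀ π, (∀ i, π i ∈ U) → (∀ i, π i ∉ acc) → C π → C' π) : S.Enforces U acc C' where
  stay := hS.stay
  win hrun hU hacc hfair := hC _ hU hacc (hS.win hrun hU hacc hfair)

theorem Enforces.win_of_eventually (hS : S.Enforces U acc C) (hC : TailInvariant C)
    {a : ℕ → M} {π : ℕ → V}
    (hstep : ∀ᶠ i in atTop, S.Step (a i) (π i) (π (i + 1)) ∧ a (i + 1) = S.update (a i) (π i))
    (hmem : ∀ᶠ i in atTop, π i ∈ U ∧ π i ∉ acc) (hfair : Gm.StronglyFair π) : C π := by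
  obtain ⟨n, hn⟩ := eventually_atTop.1 (hstep.and hmem)
  have htail := fun i ↦ hn (i + n) (Nat.le_add_left n i)
  have hrun : S.IsRun (fun i ↦ a (i + n)) (fun i ↦ π (i + n)) :=
    ⟨fun i ↦ by simpa only [Nat.add_right_comm] using (htail i).1.1,
      fun i ↦ by simpa only [Nat.add_right_comm] using (htail i).1.2⟩
  exact (hC π n).1 (hS.win hrun (fun i ↦ (htail i).2.1) (fun i ↦ (htail i).2.2)
    ((Gm.tailInvariant_stronglyFair π n).2 hfair))

theorem Enforces.winsFrom {v₀ : V} (hS : S.Enforces U ∅ C) (hv₀ : v₀ ∈ U) (a₀ : M) :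
    Gm.WinsFrom C (fun h v ↦ S.move (h.foldl S.update a₀) v) v₀ := by
  refine ⟨fun h v _ ↦ S.edge_move _ v, fun ρ₁ hρ₁ π hπ hfair ↦ ?_⟩
  obtain ⟨hπ₀, hπ⟩ := hπ
  let a : ℕ → M := fun i ↦ (List.ofFn fun j : Fin i ↦ π j).foldl S.update a₀
  have hrun : S.IsRun a π := by
    refine ⟨fun i ↦ ⟨?_, (hπ i).1⟩, fun i ↦ ?_⟩
    · rcases Gm.mem_V0_or_mem_V1 (π i) with hi | hi
      · rw [(hπ i).1 hi]
        exact S.edge_move _ _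
      · rw [(hπ i).2 hi]
        exact hρ₁ _ _ hi
    · simp only [a, List.ofFn_succ_last, List.foldl_append, List.foldl_cons, List.foldl_nil,
        Fin.val_castSucc, Fin.val_last]
  have hU : ∀ i, π i ∈ U := fun i ↦ by
    induction i with
    | zero => rwa [hπ₀]
    | succ i ih => exact hS.stay ih (Set.notMem_empty _) (hrun.step i)
  exact hS.win hrun hU (fun i ↦ Set.notMem_empty _) hfair

section Attract

variable {Φ : Set V → Set V} {Q A Y : Set V} {S : Set V → Gm.MemoryStrategy M}

open Classical in
/-- The strategy that combines the strategies `S A'` for the regions `Φ A'` into one for the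
least fixed point of `attractMap`. -/
noncomputable def attract (Φ : Set V → Set V) (Q A Y : Set V)
    (S : Set V → Gm.MemoryStrategy M) : Gm.MemoryStrategy M where
  move a v :=
    if v ∈ Gm.progressSet Φ Q A Y then Gm.succIn (lfpBelow (Gm.attractMap Φ Q A Y) v) v
    else (S (Gm.attractTarget Φ Q A Y v)).move a v
  update a v := (S (Gm.attractTarget Φ Q A Y v)).update a v
  edge_move a v := by
    split_ifs
    · exact edge_succIn _ _
    · exact (S _).edge_move a v

theorem Step.of_attract {a : M} {v w : V} (hw : (attract Φ Q A Y S).Step a v w)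
    (hv : v ∉ Gm.progressSet Φ Q A Y) : (S (Gm.attractTarget Φ Q A Y v)).Step a v w :=
  ⟨hw.1, fun hv₀ ↦ (hw.2 hv₀).trans (if_neg hv)⟩

theorem Step.eq_succIn_of_attract {a : M} {v w : V} (hw : (attract Φ Q A Y S).Step a v w)
    (hv : v ∈ Gm.progressSet Φ Q A Y) (hv₀ : v ∈ Gm.V0) :
    w = Gm.succIn (lfpBelow (Gm.attractMap Φ Q A Y) v) v :=
  (hw.2 hv₀).trans (if_pos hv)

theorem Step.mem_attractMap_lfpBelow [Finite V] (hΦ : Monotone Φ)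
    (hS : ∀ A, (S A).Enforces (Φ A) A C) (hY : lfpSet (Gm.attractMap Φ Q A Y) = Y) {a : M}
    {v w : V} (hw : (attract Φ Q A Y S).Step a v w) (hvY : v ∈ Y) (hvA : v ∉ A)
    (hv : v ∉ Gm.progressSet Φ Q A Y) :
    w ∈ Gm.attractMap Φ Q A Y (lfpBelow (Gm.attractMap Φ Q A Y) v) :=
  (hS _).stay (mem_map_attractTarget hΦ hY hvY) (not_or_intro hvA hv) (hw.of_attract hv)

theorem enforces_attract [Finite V] (hΦ : Monotone Φ) (hS : ∀ A, (S A).Enforces (Φ A) A C)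
    (hC : TailInvariant C) (hY : lfpSet (Gm.attractMap Φ Q A Y) = Y) :
    (attract Φ Q A Y S).Enforces Y A C where
  stay {a v w} hvY hvA hw := by
    have hsub : ∀ v, lfpBelow (Gm.attractMap Φ Q A Y) v ⊆ Y := fun v ↦
      (lfpBelow_subset_lfpSet (attractMap_mono hΦ)).trans hY.subset
    by_cases hv : v ∈ Gm.progressSet Φ Q A Y
    · exact mem_of_mem_apre (hsub v) hv.2 hw.1 (hw.eq_succIn_of_attract hv)
    · have hmap := (map_lfpSet (attractMap_mono hΦ)).trans hY
      exact hmap.subset (attractMap_mono hΦ ((hsub v).trans hY.superset)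
        (hw.mem_attractMap_lfpBelow hΦ hS hY hvY hvA hv))
  win {a π} hrun hπY hπA hfair := by
    have hrank : ∀ i, π i ∉ Gm.progressSet Φ Q A Y →
        lfpRank (Gm.attractMap Φ Q A Y) (π (i + 1)) ≤ lfpRank (Gm.attractMap Φ Q A Y) (π i) :=
      fun i hi ↦ lfpRank_le_of_mem
        ((hrun.step i).mem_attractMap_lfpBelow hΦ hS hY (hπY i) (hπA i) hi)
    have hprogress : ∀ᶠ i in atTop, π i ∉ Gm.progressSet Φ Q A Y :=
      hfair.eventually_notMem_of_apre_lfpBelow (fun i ↦ (hrun.step i).1) hrank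
        (fun v hv ↦ hv.2) (fun i ↦ (hrun.step i).eq_succIn_of_attract)
    obtain ⟨r, hr⟩ := exists_eventually_eq_of_eventually_succ_le
      (x := fun i ↦ lfpRank (Gm.attractMap Φ Q A Y) (π i)) (hprogress.mono hrank)
    have htarget : ∀ᶠ i in atTop, Gm.attractTarget Φ Q A Y (π i) =
        A ∪ (Q ∩ Gm.apre Y ((Gm.attractMap Φ Q A Y)^[r] ∅)) :=
      hr.mono fun i hi ↦ by rw [attractTarget, lfpBelow, hi]
    refine (hS (A ∪ (Q ∩ Gm.apre Y ((Gm.attractMap Φ Q A Y)^[r] ∅)))).win_of_eventually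
      (a := a) hC ?_ ?_ hfair
    · filter_upwards [hprogress, htarget] with i hi hTi
      rw [← hTi]
      exact ⟨(hrun.step i).of_attract hi, hrun.update i⟩
    · filter_upwards [hprogress, htarget] with i hi hTi
      rw [← hTi]
      exact ⟨mem_map_attractTarget hΦ hY (hπY i), not_or_intro (hπA i) hi⟩

end Attract

section Rotate

variable {ι : Type*} {K : ι → Set V} {Y : Set V} {S : ι → Gm.MemoryStrategy M}
  {σ : Equiv.Perm ι}

open Classical in
/-- The strategy that pursues the goals `K l` in the cyclic order given by `σ`. -/
noncomputable def rotate (σ : Equiv.Perm ι) (K : ι → Set V) (Y : Set V)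
    (S : ι → Gm.MemoryStrategy M) : Gm.MemoryStrategy (ι × M) where
  move a v := if v ∈ K a.1 then Gm.succIn Y v else (S a.1).move a.2 v
  update a v := (if v ∈ K a.1 then σ a.1 else a.1, (S a.1).update a.2 v)
  edge_move a v := by
    split_ifs
    · exact edge_succIn _ _
    · exact (S _).edge_move _ v

theorem Step.of_rotate {a : ι × M} {v w : V} (hw : (rotate σ K Y S).Step a v w)
    (hv : v ∉ K a.1) : (S a.1).Step a.2 v w :=
  ⟨hw.1, fun hv₀ ↦ (hw.2 hv₀).trans (if_neg hv)⟩

theorem enforces_rotate [Finite ι] (hσ : σ.IsCycleOn Set.univ) (hK : ∀ l, K l ⊆ Gm.cpre Y)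
    (hS : ∀ l, (S l).Enforces Y (acc ∪ K l) C) (hC : TailInvariant C) :
    (rotate σ K Y S).Enforces Y acc fun π ↦ (∀ l, ∃ᶠ i in atTop, π i ∈ K l) ∨ C π where
  stay {a v w} hvY hvacc hw := by
    by_cases hv : v ∈ K a.1
    · exact mem_of_mem_cpre (hK _ hv) hw.1 fun hv₀ ↦ (hw.2 hv₀).trans (if_pos hv)
    · exact (hS _).stay hvY (not_or_intro hvacc hv) (hw.of_rotate hv)
  win {a π} hrun hπY hπacc hfair := by
    have hstay : ∀ i, π i ∉ K (a i).1 → (a (i + 1)).1 = (a i).1 := fun i hi ↦ by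
      rw [hrun.update]
      exact if_neg hi
    by_cases hserve : ∃ᶠ i in atTop, π i ∈ K (a i).1
    · refine Or.inl fun l ↦ ?_
      have hmove : ∀ i, π i ∈ K (a i).1 → (a (i + 1)).1 = σ (a i).1 := fun i hi ↦ by
        rw [hrun.update]
        exact if_pos hi
      exact (frequently_and_eq_of_isCycleOn hσ hmove hstay hserve l).mono
        fun i hi ↦ hi.2 ▸ hi.1
    · right
      have hmiss : ∀ᶠ i in atTop, π i ∉ K (a i).1 := not_frequently.1 hserve
      have hconst : EventuallyConst (fun i ↦ (a i).1) atTop :=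
        eventuallyConst_atTop_nat.2 (eventually_atTop.1 (hmiss.mono hstay))
      have : Nonempty ι := ⟨(a 0).1⟩
      obtain ⟨l, hl⟩ := eventuallyConst_iff_exists_eventuallyEq.1 hconst
      refine (hS l).win_of_eventually (a := fun i ↦ (a i).2) hC ?_ ?_ hfair
      · filter_upwards [hmiss, hl] with i hi hli
        subst hli
        exact ⟨(hrun.step i).of_rotate hi, congrArg Prod.snd (hrun.update i)⟩
      · filter_upwards [hmiss, hl] with i hi hli
        exact ⟨hπY i, not_or_intro (hπacc i) (hli ▸ hi)⟩

end Rotate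

section Dispatch

variable {ι : Type*} {N : ι → Type*} {S : ∀ p, Gm.MemoryStrategy (N p)} {Ψ : ι → Set V}
  {idx : V → ι}

open Classical in
/-- The strategy that follows `S p` at the vertices `v` with `idx v = p`. -/
noncomputable def dispatch (idx : V → ι) (S : ∀ p, Gm.MemoryStrategy (N p)) :
    Gm.MemoryStrategy (∀ p, N p) where
  move a v := (S (idx v)).move (a (idx v)) v
  update a v := Function.update a (idx v) ((S (idx v)).update (a (idx v)) v)
  edge_move _ v := (S _).edge_move _ v

theorem enforces_dispatch [PartialOrder ι] [WellFoundedLT ι]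
    (hidx : ∀ v p, v ∈ Ψ p → v ∈ Ψ (idx v) ∧ idx v ≤ p)
    (hS : ∀ p, (S p).Enforces (Ψ p) acc C) (hC : TailInvariant C) :
    (dispatch idx S).Enforces (⋃ p, Ψ p) acc C := by
  have hmem : ∀ v ∈ ⋃ p, Ψ p, v ∈ Ψ (idx v) := fun v hv ↦
    let ⟨p, hp⟩ := Set.mem_iUnion.1 hv
    (hidx v p hp).1
  have hstep : ∀ {a v w}, v ∈ ⋃ p, Ψ p → v ∉ acc → (dispatch idx S).Step a v w →
      w ∈ Ψ (idx v) := fun hv hvacc hw ↦ (hS _).stay (hmem _ hv) hvacc hw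
  refine ⟨fun hv hvacc hw ↦ Set.mem_iUnion.2 ⟨_, hstep hv hvacc hw⟩,
    fun {a π} hrun hπ hπacc hfair ↦ ?_⟩
  have hle : ∀ i, idx (π (i + 1)) ≤ idx (π i) := fun i ↦
    (hidx _ _ (hstep (hπ i) (hπacc i) (hrun.step i))).2
  obtain ⟨p, hp⟩ := exists_eventually_eq_of_eventually_succ_le (x := fun i ↦ idx (π i))
    (.of_forall hle)
  refine (hS p).win_of_eventually (a := fun i ↦ a i p) hC ?_ ?_ hfair
  · filter_upwards [hp] with i hi
    subst hi
    refine ⟨hrun.step i, ?_⟩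
    simp only [hrun.update, dispatch, Function.update_self]
  · filter_upwards [hp] with i hi
    exact ⟨hi ▸ hmem _ (hπ i), hπacc i⟩

end Dispatch

end MemoryStrategy

section Realizable

variable {Φ : Set V → Set V} {Q : Set V} {C C' : (ℕ → V) → Prop}

/-- For every target `acc`, a strategy whose finite memory does not depend on `acc` enforces `C`
on the fair plays that stay in `Φ acc` without reaching `acc`. -/
def Realizable (Gm : LiveGameGraph V) (Φ : Set V → Set V) (C : (ℕ → V) → Prop) : Prop :=
  ∃ (M : Type) (_ : Finite M) (_ : Nonempty M), ∀ acc, ∃ S : Gm.MemoryStrategy M,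
    S.Enforces (Φ acc) acc C

namespace Realizable

theorem id : Gm.Realizable _root_.id C := by
  refine ⟨Unit, inferInstance, inferInstance, fun acc ↦
    ⟨⟨fun _ ↦ Gm.succIn acc, fun _ _ ↦ (), fun _ ↦ edge_succIn acc⟩, ?_, ?_⟩⟩
  · exact fun hv hvacc ↦ absurd hv hvacc
  · exact fun _ hmem hacc ↦ absurd (hmem 0) (hacc 0)

theorem of_forall_mem (h : Gm.Realizable Φ C) (hΦ : Gm.IsRegionOperator Φ Q)
    (hC : ∀ π, (∀ i, π i ∈ Q) → C π → C' π) : Gm.Realizable Φ C' := by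
  obtain ⟨M, hM, hM', h⟩ := h
  refine ⟨M, hM, hM', fun acc ↦ ?_⟩
  obtain ⟨S, hS⟩ := h acc
  refine ⟨S, hS.mono fun π hmem hacc ↦ hC π fun i ↦ ?_⟩
  exact ((hΦ.map_subset acc (hmem i)).resolve_left (hacc i)).1

theorem level [Finite V] {α : Type} {G : α → Set V} {L : Finset α} (h : Gm.Realizable Φ C)
    (hΦ : Gm.IsRegionOperator Φ Q) (hC : TailInvariant C) (hL : L.Nonempty) :
    Gm.Realizable (Gm.level Φ Q G L) fun π ↦ Recurrent G L π ∨ C π := by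
  obtain ⟨M, hM, hM', h⟩ := h
  choose S hS using h
  obtain ⟨σ, hσ, -⟩ := (Set.to_countable (Set.univ : Set L)).exists_cycleOn
  have : Nonempty L := hL.coe_sort
  refine ⟨L × M, inferInstance, inferInstance, fun acc ↦ ?_⟩
  set Y := Gm.level Φ Q G L acc
  let K : L → Set V := fun l ↦ Q ∩ (G l ∩ Gm.cpre Y)
  have hS' : ∀ l, (MemoryStrategy.attract Φ Q (acc ∪ K l) Y S).Enforces Y (acc ∪ K l) C := by
    refine fun l ↦ MemoryStrategy.enforces_attract hΦ.mono hS hC ?_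
    have hlfp := hΦ.lfpSet_target_level (G := G) (acc := acc) l.2
    simp only [target_eq] at hlfp
    exact hlfp
  have hK : ∀ l, K l ⊆ Gm.cpre Y := fun l ↦ Set.inter_subset_right.trans Set.inter_subset_right
  refine ⟨_, (MemoryStrategy.enforces_rotate hσ hK hS' hC).mono fun π _ _ ↦ ?_⟩
  exact Or.imp_left fun hπ l hl ↦ (hπ ⟨l, hl⟩).mono fun i hi ↦ hi.2.1

theorem biUnion {Φ : ℕ → Set V → Set V} {L : Finset ℕ}
    (h : ∀ p ∈ L, Gm.Realizable (Φ p) C) (hC : TailInvariant C) (hL : L.Nonempty) :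
    Gm.Realizable (fun acc ↦ ⋃ p ∈ L, Φ p acc) C := by
  have h' : ∀ p : L, Gm.Realizable (Φ p) C := fun p ↦ h p p.2
  choose M hM hM' h' using h'
  refine ⟨∀ p, M p, inferInstance, inferInstance, fun acc ↦ ?_⟩
  choose S hS using fun p ↦ h' p acc
  have hidx : ∀ v, ∃ p : L, ∀ q : L, v ∈ Φ q acc → v ∈ Φ p acc ∧ p ≤ q := fun v ↦ by
    rcases Set.eq_empty_or_nonempty {p : L | v ∈ Φ p acc} with hempty | hne
    · obtain ⟨p, hp⟩ := hL
      exact ⟨⟨p, hp⟩, fun q hq ↦ absurd hq (Set.eq_empty_iff_forall_notMem.1 hempty q)⟩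
    · obtain ⟨p, hp, hmin⟩ := WellFounded.has_min wellFounded_lt _ hne
      exact ⟨p, fun q hq ↦ ⟨hp, not_lt.1 (hmin q hq)⟩⟩
  choose idx hidx using hidx
  have hS' := MemoryStrategy.enforces_dispatch hidx hS hC
  rw [Set.iUnion_subtype (· ∈ L) fun p ↦ Φ p acc] at hS'
  exact ⟨_, hS'⟩

theorem genRabinAux [Finite V] {Gs : ℕ → ℕ → Set V} {Rp : ℕ → Set V} {m : ℕ → ℕ} {n : ℕ}
    {I : Finset ℕ} {Q : Set V} (hn : I.card = n) (hm : ∀ p ∈ I, 1 ≤ m p) :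
    Gm.Realizable (Gm.genRabinAux Gs Rp m n I Q) (GenRabin Gs Rp m I) := by
  induction n generalizing I Q with
  | zero => exact .id
  | succ n ih =>
    have hI : I.Nonempty := Finset.card_pos.1 (by omega)
    rw [genRabinAux_succ]
    refine .biUnion (fun p hp ↦ ?_) (tailInvariant_genRabin _ _ _ _) hI
    have hcard : (I.erase p).card = n := by rw [Finset.card_erase_of_mem hp, hn]; rfl
    have hm' : ∀ q ∈ I.erase p, 1 ≤ m q := fun q hq ↦ hm q (Finset.mem_of_mem_erase hq)
    have hL : (Finset.Icc 1 (m p)).Nonempty := Finset.nonempty_Icc.2 (hm p hp)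
    have hΦ := Gm.isRegionOperator_genRabinAux Gs Rp (Q := Q ∩ (Rp p)ᶜ) hcard hm'
    refine ((ih hcard hm').level hΦ (tailInvariant_genRabin _ _ _ _) hL).of_forall_mem
      (hΦ.level (Gs p) hL) ?_
    rintro π hπ (hrec | ⟨j, hj, hπj⟩)
    · exact ⟨p, hp, .of_forall fun i ↦ (hπ i).2, hrec⟩
    · exact ⟨j, Finset.mem_of_mem_erase hj, hπj⟩

end Realizable

theorem exists_memoryStrategy_enforces_genRabinZ [Finite V] {Gs : ℕ → ℕ → Set V}
    {Rp : ℕ → Set V} {m : ℕ → ℕ} {k : ℕ} (hm : ∀ p ∈ Finset.Icc 1 k, 1 ≤ m p) :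
    ∃ (M : Type) (_ : Finite M) (_ : Nonempty M) (S : Gm.MemoryStrategy M),
      S.Enforces (Gm.genRabinZ Gs Rp m k) ∅ (GenRabin Gs Rp m (Finset.Icc 1 k)) := by
  have hcard : (Finset.Icc 1 k).card = k := Nat.card_Icc 1 k
  obtain ⟨M, hM, hM', h⟩ := Realizable.level (G := fun _ ↦ ∅)
    (.genRabinAux (Gm := Gm) (Gs := Gs) (Rp := Rp) hcard hm)
    (Gm.isRegionOperator_genRabinAux Gs Rp (Q := ∅ᶜ) hcard hm)
    (tailInvariant_genRabin _ _ _ _) (Finset.univ_nonempty (α := Unit))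
  obtain ⟨S, hS⟩ := h ∅
  rw [← genRabinZ_eq_level] at hS
  refine ⟨M, hM, hM', S, hS.mono fun π _ _ hπ ↦ hπ.resolve_left fun hrec ↦ ?_⟩
  simpa using hrec () (Finset.mem_univ _)

end Realizable

end Soundness

end LiveGameGraph

/-! ### Completeness -/

section Paths

open Filter Relation

variable {N : Type*} {r e : N → N → Prop}

theorem exists_rank_of_reflTransGen
    (h : ∀ s, ∃ t t', ReflTransGen r s t ∧ r t t' ∧ e t t') :
    ∃ d : N → ℕ, ∀ s, ∃ t, r s t ∧ (e s t ∨ d t < d s) := by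
  let pre : Set N → Set N := fun T ↦ {s | ∃ t, r s t ∧ t ∈ T}
  let goal : Set N := {s | ∃ t, r s t ∧ e s t}
  have hmem : ∀ s, ∃ n, s ∈ pre^[n] goal := fun s ↦ by
    obtain ⟨t, t', hst, hr, he⟩ := h s
    induction hst using ReflTransGen.head_induction_on with
    | refl => exact ⟨0, t', hr, he⟩
    | head hstep _ ih =>
      obtain ⟨n, hn⟩ := ih
      exact ⟨n + 1, by rw [Function.iterate_succ_apply']; exact ⟨_, hstep, hn⟩⟩
  refine ⟨fun s ↦ sInf {n | s ∈ pre^[n] goal}, fun s ↦ ?_⟩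
  have hs : s ∈ pre^[sInf {n | s ∈ pre^[n] goal}] goal := Nat.sInf_mem (hmem s)
  cases hd : sInf {n | s ∈ pre^[n] goal} with
  | zero =>
    obtain ⟨t, hr, he⟩ := hd ▸ hs
    exact ⟨t, hr, Or.inl he⟩
  | succ n =>
    rw [hd, Function.iterate_succ_apply'] at hs
    obtain ⟨t, hr, ht⟩ := hs
    exact ⟨t, hr, Or.inr ((Nat.lt_succ_of_le (Nat.sInf_le ht)).trans_eq hd.symm)⟩

-- The path pursues the `n`-th requirement along a decreasing rank until it is met, and then
-- turns to the next one.
theorem exists_path_fulfilling_nat {e : ℕ → N → N → Prop}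
    (h : ∀ n s, ∃ t t', ReflTransGen r s t ∧ r t t' ∧ e n t t') (s : N) :
    ∃ f : ℕ → N, f 0 = s ∧ (∀ i, r (f i) (f (i + 1))) ∧ ∀ n, ∃ i ≥ n, e n (f i) (f (i + 1)) := by
  classical
  choose d hd using fun n ↦ exists_rank_of_reflTransGen (h n)
  choose next hr hnext using hd
  let x : ℕ → ℕ × N := fun i ↦
    (fun a ↦ (if e a.1 a.2 (next a.1 a.2) then a.1 + 1 else a.1, next a.1 a.2))^[i] (0, s)
  have hx : ∀ i, x (i + 1) = (if e (x i).1 (x i).2 (next (x i).1 (x i).2) then (x i).1 + 1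
      else (x i).1, next (x i).1 (x i).2) := fun i ↦ Function.iterate_succ_apply' _ _ _
  let met : ℕ → Prop := fun i ↦ e (x i).1 (x i).2 (next (x i).1 (x i).2)
  have hmet : ∃ᶠ i in atTop, met i := frequently_atTop.2 fun i ↦ by
    induction hk : d (x i).1 (x i).2 using Nat.strong_induction_on generalizing i with
    | h k ih =>
      by_cases hi : met i
      · exact ⟨i, le_rfl, hi⟩
      · have hlt : d (x (i + 1)).1 (x (i + 1)).2 < k := by
          rw [hx, if_neg hi, ← hk]
          exact (hnext _ _).resolve_left hi
        obtain ⟨j, hij, hj⟩ := ih _ hlt (i + 1) rfl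
        exact ⟨j, by omega, hj⟩
  have hcount : ∀ i, (x i).1 = Nat.count met i := fun i ↦ by
    induction i with
    | zero => rfl
    | succ i ih => rw [hx, Nat.count_succ, ← ih]; split_ifs <;> rfl
  have hinf : {i | met i}.Infinite := Nat.frequently_atTop_iff_infinite.1 hmet
  refine ⟨fun i ↦ (x i).2, rfl, fun i ↦ ?_, fun n ↦ ⟨Nat.nth met n, ?_, ?_⟩⟩
  · simpa only [hx] using hr _ _
  · exact (Nat.count_nth_of_infinite hinf n).symm.le.trans (Nat.count_le _)
  · have hn : met (Nat.nth met n) := Nat.nth_mem_of_infinite hinf n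
    have hidx : (x (Nat.nth met n)).1 = n :=
      (hcount _).trans (Nat.count_nth_of_infinite hinf n)
    simp only [met, hidx] at hn
    simpa only [hx, hidx] using hn

theorem exists_path_fulfilling {R : Type*} [Countable R] [Nonempty R] {e : R → N → N → Prop}
    (h : ∀ q s, ∃ t t', ReflTransGen r s t ∧ r t t' ∧ e q t t') (s : N) :
    ∃ f : ℕ → N, f 0 = s ∧ (∀ i, r (f i) (f (i + 1))) ∧
      ∀ q, ∃ᶠ i in atTop, e q (f i) (f (i + 1)) := by
  obtain ⟨enum, henum⟩ := exists_surjective_nat R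
  obtain ⟨f, hf₀, hf, hfe⟩ := exists_path_fulfilling_nat (fun n ↦ h (enum n.unpair.1)) s
  refine ⟨f, hf₀, hf, fun q ↦ frequently_atTop.2 fun n ↦ ?_⟩
  obtain ⟨a, rfl⟩ := henum q
  obtain ⟨i, hi, he⟩ := hfe (Nat.pair a n)
  rw [Nat.unpair_pair] at he
  exact ⟨i, (Nat.right_le_pair a n).trans hi, he⟩

end Paths

namespace LiveGameGraph

section Completeness

open Filter Relation

variable {V N : Type*} {Gm : LiveGameGraph V}

-- A live edge is served either by taking it or by making its source unreachable.
theorem exists_stronglyFair_path [Countable V] {J : Type*} [Countable J] {r : N → N → Prop}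
    {pos : N → V} {W : J → Set V} (hstep : ∀ s, ∃ t, r s t)
    (hlive : ∀ s w, Gm.El (pos s) w → ∃ t, r s t ∧ pos t = w)
    (hW : ∀ j s, ∃ t, ReflTransGen r s t ∧ pos t ∈ W j) (s : N) :
    ∃ f : ℕ → N, f 0 = s ∧ (∀ i, r (f i) (f (i + 1))) ∧ Gm.StronglyFair (fun i ↦ pos (f i)) ∧
      ∀ j, ∃ᶠ i in atTop, pos (f i) ∈ W j := by
  let served : V × V → N → N → Prop := fun q t t' ↦ Gm.El q.1 q.2 →
    (pos t = q.1 ∧ pos t' = q.2) ∨ ∀ u, ReflTransGen r t' u → pos u ≠ q.1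
  let e : (V × V) ⊕ J → N → N → Prop := Sum.elim served fun j t _ ↦ pos t ∈ W j
  have hdense : ∀ q s, ∃ t t', ReflTransGen r s t ∧ r t t' ∧ e q t t' := by
    rintro (⟨v, w⟩ | j) s
    · obtain ⟨t, ht⟩ := hstep s
      by_cases hu : Gm.El v w ∧ ∃ u, ReflTransGen r t u ∧ pos u = v
      · obtain ⟨hEl, u, hu, rfl⟩ := hu
        obtain ⟨u', huu', hu'⟩ := hlive u w hEl
        exact ⟨u, u', hu.head ht, huu', fun _ ↦ Or.inl ⟨rfl, hu'⟩⟩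
      · exact ⟨s, t, .refl, ht, fun hEl ↦ Or.inr fun u htu huv ↦ hu ⟨hEl, u, htu, huv⟩⟩
    · obtain ⟨t, hst, ht⟩ := hW j s
      obtain ⟨t', ht'⟩ := hstep t
      exact ⟨t, t', hst, ht', ht⟩
  have : Nonempty ((V × V) ⊕ J) := ⟨Sum.inl (pos s, pos s)⟩
  obtain ⟨f, hf₀, hf, hfe⟩ := exists_path_fulfilling hdense s
  refine ⟨f, hf₀, hf, stronglyFair_iff.2 fun v w hEl hv ↦ ?_, fun j ↦ hfe (Sum.inr j)⟩
  refine (hfe (Sum.inl (v, w))).mono fun i hi ↦ (hi hEl).resolve_right fun hunreach ↦ ?_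
  obtain ⟨k, hik, hk⟩ := frequently_atTop.1 hv (i + 1)
  exact hunreach (f k)
    (Nat.rel_of_forall_rel_succ_of_le (ReflTransGen r) (fun n ↦ .single (hf n)) hik) hk

/-- The game in which the choices of Player 0 have been fixed, unfolded along the histories or
other data on which these choices depend. -/
structure Unfolding (Gm : LiveGameGraph V) (N : Type*) where
  pos : N → V
  Step : N → N → Prop
  edge_of_step : ∀ {s t}, Step s t → Gm.E (pos s) (pos t)
  exists_step : ∀ s, ∃ t, Step s t
  exists_step_to : ∀ {s w}, pos s ∈ Gm.V1 → Gm.E (pos s) w → ∃ t, Step s t ∧ pos t = w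

namespace Unfolding

variable {U : Gm.Unfolding N} {Φ : Set V → Set V} {Q G K acc acc' Y : Set V}
  {C C' : (ℕ → V) → Prop} {s t : N}

theorem exists_step_notMem {S : Set V} (h : U.pos s ∉ Gm.cpre S) :
    ∃ t, U.Step s t ∧ U.pos t ∉ S := by
  rcases Gm.mem_V0_or_mem_V1 (U.pos s) with hs | hs
  · obtain ⟨t, ht⟩ := U.exists_step s
    exact ⟨t, ht, fun htS ↦ h (Or.inl ⟨hs, _, U.edge_of_step ht, htS⟩)⟩
  · obtain ⟨w, hw, hwS⟩ : ∃ w, Gm.E (U.pos s) w ∧ w ∉ S := by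
      by_contra! hE
      exact h (Or.inr ⟨hs, hE⟩)
    obtain ⟨t, ht, rfl⟩ := U.exists_step_to hs hw
    exact ⟨t, ht, hwS⟩

/-- The node `t` can be reached from `s` without entering `acc`. -/
def Reach (U : Gm.Unfolding N) (acc : Set V) : N → N → Prop :=
  ReflTransGen fun s t ↦ U.Step s t ∧ U.pos t ∉ acc

/-- Some fair branch from `s` avoids `acc` and violates `C`. -/
def Spoils (U : Gm.Unfolding N) (acc : Set V) (C : (ℕ → V) → Prop) (s : N) : Prop :=
  ∃ f : ℕ → N, f 0 = s ∧ (∀ i, U.Step (f i) (f (i + 1))) ∧ (∀ i, U.pos (f i) ∉ acc) ∧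
    Gm.StronglyFair (fun i ↦ U.pos (f i)) ∧ ¬C fun i ↦ U.pos (f i)

/-- Player 1 can avoid `acc` from `s` either until the play leaves `K`, or forever along a fair
branch that eventually violates `C`. -/
def Refutes (U : Gm.Unfolding N) (acc K : Set V) (C : (ℕ → V) → Prop) (s : N) : Prop :=
  U.pos s ∉ acc ∧ ∃ t, U.Reach acc s t ∧ (U.pos t ∉ K ∨ U.Spoils acc C t)

theorem Reach.mono (h : acc' ⊆ acc) (hst : U.Reach acc s t) : U.Reach acc' s t :=
  ReflTransGen.mono (fun _ _ ht ↦ ⟨ht.1, fun hacc ↦ ht.2 (h hacc)⟩) _ _ hst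

theorem Refutes.of_reach (h : U.Refutes acc K C t) (hs : U.pos s ∉ acc)
    (hst : U.Reach acc s t) : U.Refutes acc K C s :=
  let ⟨_, u, htu, hu⟩ := h
  ⟨hs, u, ReflTransGen.trans hst htu, hu⟩

theorem Spoils.of_step (h : U.Spoils acc C t) (hC : TailInvariant C) (hs : U.pos s ∉ acc)
    (hst : U.Step s t) : U.Spoils acc C s := by
  obtain ⟨f, rfl, hf, hacc, hfair, hfC⟩ := h
  refine ⟨fun i ↦ Nat.casesOn i s f, rfl, fun i ↦ ?_, fun i ↦ ?_,
    (Gm.tailInvariant_stronglyFair _ 1).1 hfair, fun hC' ↦ hfC ((hC _ 1).2 hC')⟩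
  · cases i with
    | zero => exact hst
    | succ i => exact hf i
  · cases i with
    | zero => exact hs
    | succ i => exact hacc i

theorem Spoils.of_reach (h : U.Spoils acc C t) (hC : TailInvariant C) (hs : U.pos s ∉ acc)
    (hst : U.Reach acc s t) : U.Spoils acc C s := by
  induction hst using ReflTransGen.head_induction_on with
  | refl => exact h
  | head hstep _ ih => exact (ih hstep.2).of_step hC hs hstep.1

/-- The dual of the soundness of `Φ`: from outside a set `acc` that is closed under `Φ` and under
`Apre(Y, ·)` within `Q`, Player 1 can avoid `acc` until the play leaves `Q ∩ Cpre(Y)`, or violate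
`C` by a fair branch. -/
def CompleteFor (U : Gm.Unfolding N) (Φ : Set V → Set V) (Q : Set V)
    (C : (ℕ → V) → Prop) : Prop :=
  ∀ acc Y, Q ∩ Gm.apre Y acc ⊆ acc → Φ acc ⊆ acc → ∀ s, U.pos s ∉ acc →
    U.Refutes acc (Q ∩ Gm.cpre Y) C s

theorem CompleteFor.refutes_of_notMem_lfpSet (h : U.CompleteFor Φ Q C)
    (hΦ : Gm.IsRegionOperator Φ Q) (hY : ∀ t, U.pos t ∉ Y → U.Refutes acc Q C' t)
    (hC : ∀ π, C' π → (∃ᶠ i in atTop, π i ∈ G) ∨ C π)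
    (hs : U.pos s ∉ lfpSet fun X ↦ Φ (Gm.target Q G acc Y X)) : U.Refutes acc Q C' s := by
  have hX := hΦ.target_lfpSet G acc Y
  have hΦX := hΦ.map_target_lfpSet G acc Y
  set X := lfpSet fun X ↦ Φ (Gm.target Q G acc Y X)
  rw [hX] at hΦX
  have hacc : acc ⊆ X := Set.subset_union_left.trans hX.subset
  have hsacc : U.pos s ∉ acc := fun hmem ↦ hs (hacc hmem)
  have hleave : ∀ t, U.Reach X s t → U.pos t ∉ Q ∩ Gm.cpre Y → U.Refutes acc Q C' s := by
    intro t hst ht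
    by_cases htQ : U.pos t ∈ Q
    · obtain ⟨t', htt', ht'⟩ := exists_step_notMem fun htY ↦ ht ⟨htQ, htY⟩
      exact (hY t' ht').of_reach hsacc ((hst.mono hacc).tail ⟨htt', (hY t' ht').1⟩)
    · exact ⟨hsacc, t, hst.mono hacc, Or.inl htQ⟩
  obtain ⟨-, t, hst, ht | ⟨f, rfl, hf, hfX, hfair, hfC⟩⟩ := h X Y
    (fun v hv ↦ hX.subset (Or.inr ⟨hv.1, Or.inr hv.2⟩)) hΦX.subset s hs
  · exact hleave t hst ht
  by_cases hfG : ∃ᶠ i in atTop, U.pos (f i) ∈ G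
  · obtain ⟨i, hi⟩ := hfG.exists
    have hreach : U.Reach X (f 0) (f i) := Nat.rel_of_forall_rel_succ_of_le
      (ReflTransGen _) (fun n ↦ .single ⟨hf n, hfX (n + 1)⟩) i.zero_le
    exact hleave (f i) (hst.trans hreach) fun hK ↦
      hfX i (hX.subset (Or.inr ⟨hK.1, Or.inl ⟨hi, hK.2⟩⟩))
  · exact ⟨hsacc, f 0, hst.mono hacc, Or.inr ⟨f, rfl, hf, fun i hi ↦ hfX i (hacc hi), hfair,
      fun hC' ↦ (hC _ hC').elim hfG hfC⟩⟩

-- The vertices with a node that is not refuted form a post-fixed point of the level.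
theorem CompleteFor.refutes_of_notMem_level {α : Type*} {L : Finset α} {G : α → Set V}
    (h : U.CompleteFor Φ Q C) (hΦ : Gm.IsRegionOperator Φ Q)
    (hs : U.pos s ∉ Gm.level Φ Q G L acc) :
    U.Refutes acc Q (fun π ↦ Recurrent G L π ∨ C π) s := by
  let Y : Set V := {v | ∃ t, U.pos t = v ∧ ¬U.Refutes acc Q (fun π ↦ Recurrent G L π ∨ C π) t}
  have hY : ∀ t, U.pos t ∉ Y → U.Refutes acc Q (fun π ↦ Recurrent G L π ∨ C π) t :=
    fun t ht ↦ not_not.1 fun hn ↦ ht ⟨t, rfl, hn⟩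
  refine hY s fun hsY ↦ hs (subset_gfpSet ?_ hsY)
  rintro _ ⟨t, rfl, ht⟩
  refine Set.mem_iInter₂.2 fun l hl ↦ ?_
  contrapose! ht
  exact h.refutes_of_notMem_lfpSet hΦ hY (fun π ↦ Or.imp_left fun hπ ↦ hπ l hl) ht

section GenRabin

-- Player 1 stays among the nodes that are not refuted: leaving them is possible only into `acc`,
-- and neither all successors nor the end of a live edge lie there.
theorem exists_branch_of_not_refutes [Countable V] {J : Type*} [Countable J] {W : J → Set V}
    (hacc : Q ∩ Gm.apre Y acc ⊆ acc)
    (hW : ∀ j s, U.pos s ∉ acc → ¬U.Refutes acc (Q ∩ Gm.cpre Y) C s →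
      ∃ t, U.Reach acc s t ∧ U.pos t ∈ W j)
    (hs : U.pos s ∉ acc) (hsC : ¬U.Refutes acc (Q ∩ Gm.cpre Y) C s) :
    ∃ f : ℕ → N, f 0 = s ∧ (∀ i, U.Step (f i) (f (i + 1))) ∧ (∀ i, U.pos (f i) ∉ acc) ∧
      Gm.StronglyFair (fun i ↦ U.pos (f i)) ∧ ∀ j, ∃ᶠ i in atTop, U.pos (f i) ∈ W j := by
  let H := {s : N // U.pos s ∉ acc ∧ ¬U.Refutes acc (Q ∩ Gm.cpre Y) C s}
  have hstay : ∀ (s : H) t, U.Step s t → U.pos t ∉ acc → ∃ t' : H, t' = t := fun s t hst ht ↦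
    ⟨⟨t, ht, fun hR ↦ s.2.2 (hR.of_reach s.2.1 (.single ⟨hst, ht⟩))⟩, rfl⟩
  have hK : ∀ s : H, U.pos s ∈ Q ∩ Gm.cpre Y := fun s ↦
    not_not.1 fun hn ↦ s.2.2 ⟨s.2.1, s, .refl, Or.inl hn⟩
  have hapre : ∀ s : H, U.pos s ∉ Gm.apre Y acc := fun s hmem ↦ s.2.1 (hacc ⟨(hK s).1, hmem⟩)
  have hstep : ∀ s : H, ∃ t : H, U.Step s t := fun s ↦ by
    obtain ⟨t, hst, ht⟩ := exists_step_notMem fun hmem ↦ hapre s (Or.inl hmem)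
    obtain ⟨t, rfl⟩ := hstay s t hst ht
    exact ⟨t, hst⟩
  have hlive : ∀ (s : H) w, Gm.El (U.pos s) w → ∃ t : H, U.Step s t ∧ U.pos t = w := by
    intro s w hw
    obtain ⟨hs₁, hE⟩ := Gm.live_sub _ _ hw
    have hpre : U.pos s ∈ Gm.pre1 Y :=
      (hK s).2.resolve_left fun hs₀ ↦ notMem_V1_of_mem_V0 hs₀.1 hs₁
    obtain ⟨t, hst, rfl⟩ := U.exists_step_to hs₁ hE
    obtain ⟨t, rfl⟩ := hstay s t hst fun ht ↦ hapre s (Or.inr ⟨⟨_, hw, ht⟩, hpre⟩)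
    exact ⟨t, hst, rfl⟩
  have hreach : ∀ (s : H) t, U.Reach acc s t →
      ∃ t' : H, t' = t ∧ ReflTransGen (fun a b : H ↦ U.Step a b) s t' := fun s t hst ↦ by
    induction hst with
    | refl => exact ⟨s, rfl, .refl⟩
    | tail _ hst ih =>
      obtain ⟨t, rfl, ht⟩ := ih
      obtain ⟨u, rfl⟩ := hstay t _ hst.1 hst.2
      exact ⟨u, rfl, ht.tail hst.1⟩
  obtain ⟨f, hf₀, hf, hfair, hfW⟩ := Gm.exists_stronglyFair_path hstep hlive (fun j s ↦ by
    obtain ⟨t, hst, ht⟩ := hW j s s.2.1 s.2.2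
    obtain ⟨t, rfl, hst'⟩ := hreach s t hst
    exact ⟨t, hst', ht⟩) ⟨s, hs, hsC⟩
  exact ⟨fun i ↦ f i, congrArg _ hf₀, hf, fun i ↦ (f i).2.1, hfair, hfW⟩

variable {Gs : ℕ → ℕ → Set V} {Rp : ℕ → Set V} {m : ℕ → ℕ} {I : Finset ℕ}

-- As every `Rp p` remains reachable, some fair branch visits all of them infinitely often.
theorem refutes_genRabin [Countable V] (hacc : Q ∩ Gm.apre Y acc ⊆ acc)
    (hI : ∀ p ∈ I, ∀ s, U.pos s ∉ acc → U.Refutes acc (Q ∩ (Rp p)ᶜ)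
      (fun π ↦ Recurrent (Gs p) (Finset.Icc 1 (m p)) π ∨ GenRabin Gs Rp m (I.erase p) π) s)
    (hs : U.pos s ∉ acc) : U.Refutes acc (Q ∩ Gm.cpre Y) (GenRabin Gs Rp m I) s := by
  by_contra hsR
  have hreach : ∀ (p : I) s, U.pos s ∉ acc →
      ¬U.Refutes acc (Q ∩ Gm.cpre Y) (GenRabin Gs Rp m I) s →
      ∃ t, U.Reach acc s t ∧ U.pos t ∈ Rp p := by
    rintro ⟨p, hp⟩ s hs hsR
    obtain ⟨-, t, hst, ht | ⟨f, hf₀, hf, hfacc, hfair, hfC⟩⟩ := hI p hp s hs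
    · have htQ : U.pos t ∈ Q := by
        by_contra htQ
        exact hsR ⟨hs, t, hst, Or.inl fun htK ↦ htQ htK.1⟩
      exact ⟨t, hst, not_not.1 fun htR ↦ ht ⟨htQ, htR⟩⟩
    · refine absurd ⟨hs, t, hst, Or.inr ⟨f, hf₀, hf, hfacc, hfair, ?_⟩⟩ hsR
      rintro ⟨j, hj, hjR, hjG⟩
      rcases eq_or_ne j p with rfl | hjp
      · exact hfC (Or.inl hjG)
      · exact hfC (Or.inr ⟨j, Finset.mem_erase.2 ⟨hjp, hj⟩, hjR, hjG⟩)
  obtain ⟨f, hf₀, hf, hfacc, hfair, hfR⟩ := exists_branch_of_not_refutes hacc hreach hs hsR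
  refine hsR ⟨hs, s, .refl, Or.inr ⟨f, hf₀, hf, hfacc, hfair, ?_⟩⟩
  rintro ⟨p, hp, hpR, -⟩
  exact hfR ⟨p, hp⟩ hpR

theorem completeFor_genRabinAux [Countable V] (U : Gm.Unfolding N) {n : ℕ} (hn : I.card = n)
    (hm : ∀ p ∈ I, 1 ≤ m p) :
    U.CompleteFor (Gm.genRabinAux Gs Rp m n I Q) Q (GenRabin Gs Rp m I) := by
  induction n generalizing I Q with
  | zero =>
    obtain rfl := Finset.card_eq_zero.1 hn
    exact fun acc Y hacc _ s hs ↦ refutes_genRabin hacc (by simp) hs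
  | succ n ih =>
    refine fun acc Y hacc hΦ s hs ↦ refutes_genRabin hacc (fun p hp s hs ↦ ?_) hs
    have hcard : (I.erase p).card = n := by rw [Finset.card_erase_of_mem hp, hn]; rfl
    have hm' : ∀ q ∈ I.erase p, 1 ≤ m q := fun q hq ↦ hm q (Finset.mem_of_mem_erase hq)
    refine (ih hcard hm').refutes_of_notMem_level
      (Gm.isRegionOperator_genRabinAux Gs Rp hcard hm') fun hmem ↦ hs (hΦ ?_)
    rw [genRabinAux_succ]
    exact Set.mem_biUnion hp hmem

theorem spoils_of_notMem_genRabinZ [Countable V] {k : ℕ}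
    (hm : ∀ p ∈ Finset.Icc 1 k, 1 ≤ m p) (hs : U.pos s ∉ Gm.genRabinZ Gs Rp m k) :
    U.Spoils ∅ (GenRabin Gs Rp m (Finset.Icc 1 k)) s := by
  have hcard : (Finset.Icc 1 k).card = k := Nat.card_Icc 1 k
  rw [genRabinZ_eq_level] at hs
  obtain ⟨hs₀, t, hst, ht | ⟨f, hf₀, hf, hfacc, hfair, hfC⟩⟩ :=
    (U.completeFor_genRabinAux hcard hm).refutes_of_notMem_level
      (Gm.isRegionOperator_genRabinAux Gs Rp hcard hm) hs
  · simp at ht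
  · exact Spoils.of_reach ⟨f, hf₀, hf, hfacc, hfair, fun h ↦ hfC (Or.inr h)⟩
      (tailInvariant_genRabin _ _ _ _) hs₀ hst

end GenRabin

section Strategy

variable {ρ : List V → V → V}

/-- The unfolding of the game under the Player-0 strategy `ρ`; its nodes are a history and the
current vertex. -/
def ofStrategy (ρ : List V → V → V) (hρ : Gm.Strategy0 ρ) : Gm.Unfolding (List V × V) where
  pos := Prod.snd
  Step s t := t.1 = s.1 ++ [s.2] ∧ Gm.E s.2 t.2 ∧ (s.2 ∈ Gm.V0 → t.2 = ρ s.1 s.2)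
  edge_of_step h := h.2.1
  exists_step s := by
    by_cases hs : s.2 ∈ Gm.V0
    · exact ⟨(s.1 ++ [s.2], ρ s.1 s.2), rfl, hρ _ _ hs, fun _ ↦ rfl⟩
    · obtain ⟨w, hw⟩ := Gm.succ_nonempty s.2
      exact ⟨(s.1 ++ [s.2], w), rfl, hw, fun hs' ↦ absurd hs' hs⟩
  exists_step_to {s w} hs hw :=
    ⟨(s.1 ++ [s.2], w), ⟨rfl, hw, fun hs' ↦ absurd hs (notMem_V1_of_mem_V0 hs')⟩, rfl⟩

theorem exists_compliant_of_branch (hρ : Gm.Strategy0 ρ) {f : ℕ → List V × V} {v₀ : V}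
    (hf₀ : f 0 = ([], v₀)) (hf : ∀ i, (ofStrategy ρ hρ).Step (f i) (f (i + 1))) :
    ∃ ρ₁, Gm.Strategy1 ρ₁ ∧ Gm.Compliant ρ ρ₁ v₀ fun i ↦ (f i).2 := by
  have hhist : ∀ i, (f i).1 = List.ofFn fun j : Fin i ↦ (f j).2 := fun i ↦ by
    induction i with
    | zero => simp [hf₀]
    | succ i ih => simp only [(hf i).1, ih, List.ofFn_succ_last, Fin.val_castSucc, Fin.val_last]
  refine ⟨fun h v ↦ Gm.succIn {(f (h.length + 1)).2} v, fun _ _ _ ↦ edge_succIn _ _,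
    congrArg Prod.snd hf₀, fun i ↦ ⟨fun hi ↦ hhist i ▸ (hf i).2.2 hi, fun _ ↦ ?_⟩⟩
  have hsucc : Gm.succIn {(f (i + 1)).2} (f i).2 = (f (i + 1)).2 :=
    Set.mem_singleton_iff.1 (succIn_mem ⟨_, (hf i).2.1, rfl⟩)
  simp only [List.length_ofFn, hsucc]

end Strategy

end Unfolding

theorem winningRegion_subset_genRabinZ [Countable V] {Gs : ℕ → ℕ → Set V} {Rp : ℕ → Set V}
    {m : ℕ → ℕ} {k : ℕ} (hm : ∀ p ∈ Finset.Icc 1 k, 1 ≤ m p) :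
    Gm.WinningRegion (GenRabin Gs Rp m (Finset.Icc 1 k)) ⊆ Gm.genRabinZ Gs Rp m k := by
  rintro v₀ ⟨ρ, hρ, hwin⟩
  by_contra hv₀
  obtain ⟨f, hf₀, hf, -, hfair, hfC⟩ :=
    Unfolding.spoils_of_notMem_genRabinZ (U := .ofStrategy ρ hρ) (s := ([], v₀)) hm hv₀
  obtain ⟨ρ₁, hρ₁, hπ⟩ := Unfolding.exists_compliant_of_branch hρ hf₀ hf
  exact hfC (hwin ρ₁ hρ₁ _ hπ hfair)

end Completeness

end LiveGameGraph

/-- the permutation-based generalized Rabin fixpoint equals the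
winning region of Player 0 in the fair adversarial generalized Rabin game, and a
finite-memory winning Player-0 strategy exists on it. -/
theorem fair_adversarial_gen_rabin {V : Type*} [Fintype V]
    (Gm : LiveGameGraph V) (k : ℕ) (Gs : ℕ → ℕ → Set V) (Rp : ℕ → Set V)
    (m : ℕ → ℕ) (hm : ∀ p ∈ Finset.Icc 1 k, 1 ≤ m p) (Zstar : Set V)
    (hZ : Zstar = Gm.genRabinZ Gs Rp m k) :
    Zstar = Gm.WinningRegion
        (fun π => ∃ j ∈ Finset.Icc 1 k,
          (∃ N, ∀ i ≥ N, π i ∉ Rp j) ∧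
          ∀ l ∈ Finset.Icc 1 (m j), ∀ N, ∃ i ≥ N, π i ∈ Gs j l) ∧
    ∃ (M : Type) (_ : Fintype M) (m0 : M) (upd : M → V → M) (c : M → V → V),
      (∀ mm v, v ∈ Gm.V0 → Gm.E v (c mm v)) ∧
      ∀ v0 ∈ Zstar,
        Gm.WinsFrom
          (fun π => ∃ j ∈ Finset.Icc 1 k,
            (∃ N, ∀ i ≥ N, π i ∉ Rp j) ∧
            ∀ l ∈ Finset.Icc 1 (m j), ∀ N, ∃ i ≥ N, π i ∈ Gs j l)
          (fun h v => c (List.foldl upd m0 h) v) v0 := by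
  subst hZ
  simp only [← LiveGameGraph.genRabin_iff]
  obtain ⟨M, _, _, S, hS⟩ :=
    Gm.exists_memoryStrategy_enforces_genRabinZ (Gs := Gs) (Rp := Rp) hm
  let m₀ : M := Classical.arbitrary M
  refine ⟨Set.Subset.antisymm (fun v hv ↦ ⟨_, hS.winsFrom hv m₀⟩)
    (LiveGameGraph.winningRegion_subset_genRabinZ hm), ?_⟩
  exact ⟨M, Fintype.ofFinite M, m₀, S.update, S.move, fun a v _ ↦ S.edge_move a v,
    fun v hv ↦ hS.winsFrom hv m₀⟩
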